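/- arXiv:2505.00648 — 3 statements merged into one kernel-verified Lean document; each statement's English description precedes it below -/
import Mathlib

section
/- Let H be an m×m real symmetric positive-definite matrix, let B be an m×m real symmetric matrix, let Q_S be an m×k real matrix and Q_L an m×(m−k) real matrix such that Q_Sᵀ H Q_S = I_k, Q_Lᵀ H Q_L = I_{m−k}, Q_Sᵀ H Q_L = 0, Q_Lᵀ B Q_S = 0, and Q_Lᵀ B Q_L is invertible. Then Q_S Q_Sᵀ H + Q_L (Q_Lᵀ B Q_L)⁻¹ Q_Lᵀ B = I_m. -/
open Matrix

/-- Decomposition identity: `Q_S Q_Sᵀ H + Q_L (Q_Lᵀ B Q_L)⁻¹ Q_Lᵀ B = I`. -/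
theorem decomposition_identity {m k : ℕ}
    (H B : Matrix (Fin m) (Fin m) ℝ)
    (hHpd : H.PosDef) (hBsymm : B.IsSymm)
    (QS : Matrix (Fin m) (Fin k) ℝ) (QL : Matrix (Fin m) (Fin (m - k)) ℝ)
    (hS : QSᵀ * H * QS = 1) (hL : QLᵀ * H * QL = 1) (hSL : QSᵀ * H * QL = 0)
    (hBSL : QLᵀ * B * QS = 0) (hBL : IsUnit (QLᵀ * B * QL)) :
    QS * QSᵀ * H + QL * (QLᵀ * B * QL)⁻¹ * QLᵀ * B = 1 := by
  have hk : k ≤ m := by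
    have h1 : (QSᵀ * H * QS).rank = k := by
      rw [hS, Matrix.rank_one, Fintype.card_fin]
    have h2 : (QSᵀ * H * QS).rank ≤ m := by
      refine (Matrix.rank_mul_le_right _ _).trans ?_
      simpa using Matrix.rank_le_card_height QS
    omega
  have hdet := (Matrix.isUnit_iff_isUnit_det _).mp hBL
  have hVW : fromRows (QSᵀ * H) ((QLᵀ * B * QL)⁻¹ * (QLᵀ * B)) * fromCols QS QL = 1 := by
    rw [fromRows_mul_fromCols, hS, hSL, Matrix.mul_assoc _ (QLᵀ * B) QS, hBSL,
      Matrix.mul_assoc _ (QLᵀ * B) QL, Matrix.nonsing_inv_mul _ hdet, Matrix.mul_zero,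
      fromBlocks_one]
  have e : Fin k ⊕ Fin (m - k) ≃ Fin m :=
    Fintype.equivOfCardEq (by simp; omega)
  have hWV := (Matrix.mul_eq_one_comm_of_equiv e).mp hVW
  rw [fromCols_mul_fromRows] at hWV
  simpa only [Matrix.mul_assoc] using hWV
end

section
/- Let n_Γ, n_I, k, m be natural numbers with k + m = n_I. Let B be the (n_Γ+n_I)×(n_Γ+n_I) complex matrix given in block form B = [[B_ΓΓ, B_ΓI],[B_IΓ, B_II]] with B_IΓ = B_ΓIᵀ and B_II symmetric (B_II = B_IIᵀ). Let Q_S be an n_I×k complex matrix and Q_L an n_I×m complex matrix such that Q_Sᵀ B_II Q_L = 0 and Q_Lᵀ B_II Q_L is invertible, and set B_L = Q_L (Q_Lᵀ B_II Q_L)⁻¹ Q_Lᵀ. Then for every v_Γ ∈ ℂ^{n_Γ}, α ∈ ℂ^k and b ∈ ℂ^m, the vectors x = (v_Γ, −B_L B_IΓ v_Γ + Q_S α) and y = (0, Q_L b) satisfy xᵀ B y = 0. -/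
open Matrix

/-- Orthogonality of the coarse extension against the local interior modes:
`xᵀ B y = 0` for `x = (v_Γ, -B_L B_IΓ v_Γ + Q_S α)` and `y = (0, Q_L b)`. -/
theorem coarse_extension_orthogonal {nΓ nI k m : ℕ} (hkm : k + m = nI)
    (BΓΓ : Matrix (Fin nΓ) (Fin nΓ) ℂ) (BΓI : Matrix (Fin nΓ) (Fin nI) ℂ)
    (BIΓ : Matrix (Fin nI) (Fin nΓ) ℂ) (BII : Matrix (Fin nI) (Fin nI) ℂ)
    (hBIΓ : BIΓ = BΓIᵀ) (hBII : BII.IsSymm)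
    (QS : Matrix (Fin nI) (Fin k) ℂ) (QL : Matrix (Fin nI) (Fin m) ℂ)
    (hSL : QSᵀ * BII * QL = 0) (hinv : IsUnit (QLᵀ * BII * QL))
    (vΓ : Fin nΓ → ℂ) (α : Fin k → ℂ) (b : Fin m → ℂ) :
    (Sum.elim vΓ
        (-(QL * (QLᵀ * BII * QL)⁻¹ * QLᵀ * BIΓ).mulVec vΓ + QS.mulVec α)) ⬝ᵥ
      (fromBlocks BΓΓ BΓI BIΓ BII).mulVec (Sum.elim 0 (QL.mulVec b)) = 0 := by
  have key : ∀ {p q : ℕ} (A : Matrix (Fin p) (Fin q) ℂ) (v : Fin q → ℂ) (w : Fin p → ℂ),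
      A.mulVec v ⬝ᵥ w = v ⬝ᵥ Aᵀ.mulVec w := by
    intro p q A v w
    rw [dotProduct_mulVec, vecMul_transpose]
  have hP : (QLᵀ * BII * QL)ᵀ = QLᵀ * BII * QL := by
    rw [transpose_mul, transpose_mul, transpose_transpose, hBII.eq, Matrix.mul_assoc]
  have hdet : IsUnit (QLᵀ * BII * QL).det := (Matrix.isUnit_iff_isUnit_det _).1 hinv
  have hM : (QL * (QLᵀ * BII * QL)⁻¹ * QLᵀ * BIΓ)ᵀ * (BII * QL) = BΓI * QL := by
    rw [transpose_mul, transpose_mul, transpose_mul, transpose_nonsing_inv, hP, hBIΓ,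
      transpose_transpose, transpose_transpose]
    calc BΓI * (QL * ((QLᵀ * BII * QL)⁻¹ * QLᵀ)) * (BII * QL)
        = BΓI * QL * ((QLᵀ * BII * QL)⁻¹ * (QLᵀ * BII * QL)) := by
          simp only [Matrix.mul_assoc]
      _ = BΓI * QL := by rw [Matrix.nonsing_inv_mul _ hdet, Matrix.mul_one]
  rw [fromBlocks_mulVec, sumElim_dotProduct_sumElim]
  simp only [Sum.elim_comp_inl, Sum.elim_comp_inr, mulVec_zero, zero_add]
  rw [add_dotProduct, neg_dotProduct, key, key, mulVec_mulVec, mulVec_mulVec, mulVec_mulVec,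
    mulVec_mulVec, mulVec_mulVec, hSL, Matrix.mul_assoc _ BII QL, hM]
  simp
end

section
/- Let H be an m×m real symmetric positive-definite matrix and B an m×m real symmetric matrix. Let Q_S be an m×k real matrix and Q_L an m×(m−k) real matrix such that Q_Sᵀ H Q_S = I_k, Q_Lᵀ H Q_L = I_{m−k}, Q_Sᵀ H Q_L = 0, and Q_Lᵀ B Q_L is invertible. Then the (m+k)×(m+k) block matrix [[B, H Q_S],[Q_Sᵀ H, 0]] is invertible. -/
open Matrix

/-- Well-posedness of the saddle-point problem with Lagrange multipliers:
the block matrix `[[B, H Q_S], [Q_Sᵀ H, 0]]` is invertible. -/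
theorem saddle_point_invertible {m k : ℕ}
    (H B : Matrix (Fin m) (Fin m) ℝ)
    (hHpd : H.PosDef) (hBsymm : B.IsSymm)
    (QS : Matrix (Fin m) (Fin k) ℝ) (QL : Matrix (Fin m) (Fin (m - k)) ℝ)
    (hS : QSᵀ * H * QS = 1) (hL : QLᵀ * H * QL = 1) (hSL : QSᵀ * H * QL = 0)
    (hBL : IsUnit (QLᵀ * B * QL)) :
    IsUnit (fromBlocks B (H * QS) (QSᵀ * H) (0 : Matrix (Fin k) (Fin k) ℝ)) := by
  have hHs : Hᵀ = H := by
    have := hHpd.isHermitian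
    simpa [IsHermitian, conjTranspose_eq_transpose_of_trivial] using this
  have hLS : QLᵀ * H * QS = 0 := by
    have := congrArg transpose hSL
    simpa [transpose_mul, hHs, Matrix.mul_assoc] using this
  have hkm : k ≤ m := by
    have h1 : (QSᵀ * H * QS).rank = k := by rw [hS, rank_one, Fintype.card_fin]
    have h2 := rank_mul_le_right (QSᵀ * H) QS
    have h3 := rank_le_height QS
    omega
  have hone : fromRows (QSᵀ * H) (QLᵀ * H) * fromCols QS QL = 1 := by
    rw [fromRows_mul_fromCols, hS, hL, hSL, hLS, fromBlocks_one]
  have hcompl : QS * (QSᵀ * H) + QL * (QLᵀ * H) = 1 := by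
    rw [← fromCols_mul_fromRows]
    have e : Fin k ⊕ Fin (m - k) ≃ Fin m := Fintype.equivOfCardEq (by simp; omega)
    exact (mul_eq_one_comm_of_equiv e).1 hone
  rw [← mulVec_injective_iff_isUnit, ← coe_mulVecLin, ← LinearMap.ker_eq_bot,
    LinearMap.ker_eq_bot']
  intro v hv
  obtain ⟨x, y, rfl⟩ : ∃ x y, v = Sum.elim x y :=
    ⟨v ∘ Sum.inl, v ∘ Sum.inr, (Sum.elim_comp_inl_inr v).symm⟩
  rw [mulVecLin_apply, fromBlocks_mulVec] at hv
  have e1 : B *ᵥ x + (H * QS) *ᵥ y = 0 := by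
    funext i; simpa using congrFun hv (Sum.inl i)
  have e2 : (QSᵀ * H) *ᵥ x = 0 := by
    funext i; simpa using congrFun hv (Sum.inr i)
  have hx : QL *ᵥ ((QLᵀ * H) *ᵥ x) = x := by
    have := congrArg (fun M => M *ᵥ x) hcompl
    simp only [add_mulVec, one_mulVec] at this
    rw [← mulVec_mulVec x QS, e2, mulVec_zero, zero_add, ← mulVec_mulVec x QL] at this
    exact this
  have hz : (QLᵀ * H) *ᵥ x = 0 := by
    apply mulVec_injective_iff_isUnit.2 hBL
    have := congrArg (fun w => QLᵀ *ᵥ w) e1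
    simp only [mulVec_add, mulVec_mulVec, mulVec_zero, ← Matrix.mul_assoc] at this
    rw [hLS, zero_mulVec, add_zero] at this
    rw [← mulVec_mulVec _ (QLᵀ * B) QL, hx, this, mulVec_zero]
  have hx0 : x = 0 := by rw [← hx, hz, mulVec_zero]
  subst hx0
  have hy : y = 0 := by
    have := congrArg (fun w => QSᵀ *ᵥ w) e1
    simpa [mulVec_mulVec, ← Matrix.mul_assoc, hS] using this
  subst hy
  funext i
  cases i <;> rfl
end
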